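/- arXiv:2312.01378 — 2 statements merged into one kernel-verified Lean document; each statement's English description precedes it below -/
import Mathlib

section
/- An induced subgraph inclusion of directed graphs f : A ↪ X is a long cofibration if and only if the induced inclusion of preorders Pre(f) : Pre(A) → Pre(X) is a Dwyer morphism. -/
/-- `u` reaches `v` in the digraph `(V, E)`. -/
def Reaches {V : Type} (E : V → V → Prop) (u v : V) : Prop :=
  Relation.ReflTransGen E u v

/-- The induced subgraph inclusion `A ↪ X` (where `X` is the digraph `(V, E)` and `A` is an
induced subgraph, given by a set of vertices) is a *long cofibration* if
(1) no vertex of `X` outside `A` reaches a vertex of `A`, and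
(2) for each vertex `x` of the reach of `A` (the set of vertices reachable from some vertex
of `A`) there is a vertex `π x ∈ A` such that for every `a ∈ A`, `a` reaches `x` in `X` iff
`a` reaches `π x` in `X`. -/
def IsLongCofib {V : Type} (E : V → V → Prop) (A : Set V) : Prop :=
  (∀ x, x ∉ A → ∀ a ∈ A, ¬ Reaches E x a) ∧
  (∀ x, (∃ a ∈ A, Reaches E a x) →
    ∃ π ∈ A, ∀ a ∈ A, (Reaches E a x ↔ Reaches E a π))

/-- The inclusion `Pre(A) → Pre(X)` induced on reachability preorders by an induced subgraph
inclusion `A ↪ X` is a *Dwyer morphism* if it is the inclusion of a sub-preorder, i.e.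
reachability within `A` agrees with reachability within `X` between vertices of `A`
(fullness), and it factors through a sub-preorder `U` such that
(1) if `x ≤ y` in `Pre(X)` with `y ∈ A` then `x ∈ A`;
(2) `U` is upwards closed in `Pre(X)`;
(3) there is a monotone retraction `p : U → A` with `p u ≤ u` for all `u ∈ U`. -/
def PreIsDwyer {V : Type} (E : V → V → Prop) (A : Set V) : Prop :=
  (∀ a b : A, Reaches (fun u v : A => E u v) a b ↔ Reaches E a b) ∧
  (∀ x, ∀ a ∈ A, Reaches E x a → x ∈ A) ∧
  ∃ U : Set V, A ⊆ U ∧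
    (∀ u ∈ U, ∀ x, Reaches E u x → x ∈ U) ∧
    ∃ p : U → A,
      (∀ u v : U, Reaches E u v → Reaches E (p u) (p v)) ∧
      (∀ (a : V) (ha : a ∈ A) (hu : a ∈ U), (p ⟨a, hu⟩ : V) = a) ∧
      (∀ u : U, Reaches E (p u) u)

/-- An induced subgraph inclusion of directed graphs `A ↪ X` is a long cofibration if and
only if the induced inclusion of reachability preorders `Pre(A) → Pre(X)` is a Dwyer
morphism. -/
theorem isLongCofib_iff_preIsDwyer {V : Type} (E : V → V → Prop) (A : Set V) :
    IsLongCofib E A ↔ PreIsDwyer E A := by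
  constructor
  · rintro ⟨h1, h2⟩
    have hdown : ∀ x, ∀ a ∈ A, Reaches E x a → x ∈ A := fun x a ha h => by
      by_contra hx
      exact h1 x hx a ha h
    refine ⟨?_, hdown, {x | ∃ a ∈ A, Reaches E a x}, ?_, ?_, ?_⟩
    · rintro ⟨a, ha⟩ ⟨b, hb⟩
      constructor
      · intro h
        exact Relation.ReflTransGen.lift (fun u : A => (u : V)) (fun _ _ h => h) _ _ h
      · intro h
        have key : ∀ c, Reaches E a c → ∀ hc : c ∈ A,
            Reaches (fun u v : A => E u v) ⟨a, ha⟩ ⟨c, hc⟩ := by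
          intro c h
          induction h with
          | refl => intro hc; exact Relation.ReflTransGen.refl
          | tail _ hE ih =>
            intro hc
            exact Relation.ReflTransGen.tail
              (ih (hdown _ _ hc (Relation.ReflTransGen.single hE))) hE
        exact key b h hb
    · intro a ha
      exact ⟨a, ha, Relation.ReflTransGen.refl⟩
    · rintro u ⟨a, ha, h⟩ x hx
      exact ⟨a, ha, Relation.ReflTransGen.trans h hx⟩
    · have hq : ∀ u : {x | ∃ a ∈ A, Reaches E a x}, ∃ q : A, ((u : V) ∈ A → (q : V) = u) ∧
          ∀ a ∈ A, (Reaches E a u ↔ Reaches E a q) := by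
        rintro ⟨u, hu⟩
        by_cases huA : u ∈ A
        · exact ⟨⟨u, huA⟩, fun _ => rfl, fun _ _ => Iff.rfl⟩
        · obtain ⟨q, hqA, hq⟩ := h2 u hu
          exact ⟨⟨q, hqA⟩, fun h => absurd h huA, hq⟩
      choose p hp1 hp2 using hq
      have hle : ∀ u, Reaches E (p u) u := fun u =>
        (hp2 u _ (p u).2).2 Relation.ReflTransGen.refl
      exact ⟨p, fun u v h => (hp2 v _ (p u).2).1 (Relation.ReflTransGen.trans (hle u) h),
        fun a ha hu => hp1 ⟨a, hu⟩ ha, hle⟩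
  · rintro ⟨-, hdown, U, hAU, hU, p, hmono, hret, hle⟩
    refine ⟨fun x hx a ha h => hx (hdown x a ha h), ?_⟩
    rintro x ⟨a, ha, hax⟩
    have hxU : x ∈ U := hU a (hAU ha) x hax
    refine ⟨p ⟨x, hxU⟩, (p ⟨x, hxU⟩).2, fun b hb => ⟨fun h => ?_, fun h => ?_⟩⟩
    · have := hmono ⟨b, hAU hb⟩ ⟨x, hxU⟩ h
      rwa [hret b hb] at this
    · exact Relation.ReflTransGen.trans h (hle ⟨x, hxU⟩)
end

section
/- Let i : A → X be a long cofibration of directed graphs and f : A → Y any map of directed graphs, and form the pushout X ∪_A Y in the category of directed graphs. Then the canonical map j : Y → X ∪_A Y is a long cofibration. -/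
/-- The induced subgraph inclusion `A ↪ X` is a *long cofibration* if
(1) no vertex of `X` outside `A` reaches a vertex of `A`, and
(2) for each vertex `x` reachable from some vertex of `A` there is `π x ∈ A` with:
for every `a ∈ A`, `a` reaches `x` iff `a` reaches `π x`. -/
def IsLongCofibSet {V : Type} (E : V → V → Prop) (A : Set V) : Prop :=
  (∀ x, x ∉ A → ∀ a ∈ A, ¬ Reaches E x a) ∧
  (∀ x, (∃ a ∈ A, Reaches E a x) →
    ∃ π ∈ A, ∀ a ∈ A, (Reaches E a x ↔ Reaches E a π))

/-- A map of directed graphs `j : (Y, EY) → (P, EP)` is a long cofibration if it is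
(up to isomorphism) an induced subgraph inclusion (injective, and for `y ≠ y'` there is an
edge `j y → j y'` iff there is an edge `y → y'`) satisfying conditions (1) and (2) above
for its image. -/
def IsLongCofibMap {Y P : Type} (EY : Y → Y → Prop) (EP : P → P → Prop) (j : Y → P) : Prop :=
  Function.Injective j ∧
  (∀ y y', y ≠ y' → (EP (j y) (j y') ↔ EY y y')) ∧
  (∀ p, p ∉ Set.range j → ∀ y, ¬ Reaches EP p (j y)) ∧
  (∀ p, (∃ y, Reaches EP (j y) p) →
    ∃ y₀, ∀ y, (Reaches EP (j y) p ↔ Reaches EP (j y) (j y₀)))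

section Pushout

variable {VX VY : Type} (EX : VX → VX → Prop) (EY : VY → VY → Prop)
  (A : Set VX) (f : A → VY)

/-- The relation identifying each `a ∈ A ⊆ V(X)` with its image `f a ∈ V(Y)`. -/
def pushRel : (VX ⊕ VY) → (VX ⊕ VY) → Prop := fun p q =>
  ∃ a : A, p = Sum.inl (a : VX) ∧ q = Sum.inr (f a)

/-- The vertex set of the pushout `X ∪_A Y`: the pushout of sets `V(X) ⊔_{V(A)} V(Y)`. -/
def PushV : Type := Quot (pushRel A f)

/-- The edge relation of the pushout `X ∪_A Y`: there is an edge between two classes iff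
they have representatives joined by an edge of `X` or an edge of `Y`. -/
def PushE : PushV A f → PushV A f → Prop := fun p q =>
  (∃ u v : VX, EX u v ∧ Quot.mk _ (Sum.inl u) = p ∧ Quot.mk _ (Sum.inl v) = q) ∨
  (∃ u v : VY, EY u v ∧ Quot.mk _ (Sum.inr u) = p ∧ Quot.mk _ (Sum.inr v) = q)

/-- The canonical map `g : X → X ∪_A Y`. -/
def gMap : VX → PushV A f := fun x => Quot.mk _ (Sum.inl x)

/-- The canonical map `j : Y → X ∪_A Y`. -/
def jMap : VY → PushV A f := fun y => Quot.mk _ (Sum.inr y)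

end Pushout

open Classical in
/-- Normal form of a vertex of the pushout. -/
noncomputable def pushNF {VX VY : Type} (A : Set VX) (f : A → VY) : PushV A f → VX ⊕ VY :=
  Quot.lift (fun s => match s with
    | Sum.inl x => if h : x ∈ A then Sum.inr (f ⟨x, h⟩) else Sum.inl x
    | Sum.inr y => Sum.inr y) (by
      rintro _ _ ⟨a, rfl, rfl⟩
      simp)

theorem pushNF_j {VX VY : Type} (A : Set VX) (f : A → VY) (y : VY) :
    pushNF A f (jMap A f y) = Sum.inr y := rfl

theorem pushNF_g {VX VY : Type} (A : Set VX) (f : A → VY) (x : VX) (h : x ∉ A) :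
    pushNF A f (gMap A f x) = Sum.inl x := by
  simp [pushNF, gMap, h]

theorem gMap_mem {VX VY : Type} (A : Set VX) (f : A → VY) (x : VX) (h : x ∈ A) :
    gMap A f x = jMap A f (f ⟨x, h⟩) := Quot.sound ⟨⟨x, h⟩, rfl, rfl⟩

theorem jMap_inj {VX VY : Type} (A : Set VX) (f : A → VY) : Function.Injective (jMap A f) := by
  intro y y' h
  have := congrArg (pushNF A f) h
  simpa [pushNF_j] using this

theorem g_eq_j {VX VY : Type} (A : Set VX) (f : A → VY) (x : VX) (y : VY)
    (h : gMap A f x = jMap A f y) : ∃ hx : x ∈ A, f ⟨x, hx⟩ = y := by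
  by_cases hx : x ∈ A
  · exact ⟨hx, jMap_inj A f ((gMap_mem A f x hx).symm.trans h)⟩
  · have := congrArg (pushNF A f) h
    rw [pushNF_g A f x hx, pushNF_j] at this
    cases this

theorem g_eq_g {VX VY : Type} (A : Set VX) (f : A → VY) (v x : VX) (hx : x ∉ A)
    (h : gMap A f v = gMap A f x) : v = x := by
  by_cases hv : v ∈ A
  · rw [gMap_mem A f v hv] at h
    exact absurd (g_eq_j A f x _ h.symm).1 hx
  · have := congrArg (pushNF A f) h
    rw [pushNF_g A f x hx, pushNF_g A f v hv] at this
    exact Sum.inl.inj this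

theorem edge_to_j {VX VY : Type} (EX : VX → VX → Prop) (EY : VY → VY → Prop)
    (A : Set VX) (hA : IsLongCofibSet EX A) (f : A → VY)
    (hf : ∀ u v : A, EX u v → f u = f v ∨ EY (f u) (f v)) (p : PushV A f) (y' : VY)
    (h : PushE EX EY A f p (jMap A f y')) : ∃ y, jMap A f y = p ∧ (y = y' ∨ EY y y') := by
  rcases h with ⟨u, v, e, hu, hv⟩ | ⟨u, v, e, hu, hv⟩
  · obtain ⟨hvA, rfl⟩ := g_eq_j A f v y' hv
    have huA : u ∈ A := by
      by_contra hn
      exact hA.1 u hn v hvA (Relation.ReflTransGen.single e)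
    exact ⟨f ⟨u, huA⟩, (gMap_mem A f u huA).symm.trans hu, hf ⟨u, huA⟩ ⟨v, hvA⟩ e⟩
  · have := jMap_inj A f hv
    subst this
    exact ⟨u, hu, Or.inr e⟩

theorem reach_to_g {VX VY : Type} (EX : VX → VX → Prop) (EY : VY → VY → Prop)
    (A : Set VX) (f : A → VY) (y : VY) (p : PushV A f)
    (h : Reaches (PushE EX EY A f) (jMap A f y) p) :
    ∀ x, x ∉ A → p = gMap A f x → ∃ a ∈ A, Reaches EX a x ∧
      Reaches (PushE EX EY A f) (jMap A f y) (gMap A f a) := by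
  induction h with
  | refl =>
    intro x hx e
    exact absurd (g_eq_j A f x y e.symm).1 hx
  | @tail b c hb hbc ih =>
    intro x hx e
    subst e
    rcases hbc with ⟨u, v, e, hu, hv⟩ | ⟨u, v, e, hu, hv⟩
    · have := g_eq_g A f v x hx hv
      subst this
      by_cases huA : u ∈ A
      · refine ⟨u, huA, Relation.ReflTransGen.single e, ?_⟩
        subst hu
        exact hb
      · obtain ⟨a, ha, h1, h2⟩ := ih u huA hu.symm
        exact ⟨a, ha, Relation.ReflTransGen.tail h1 e, h2⟩
    · exact absurd (g_eq_j A f x v hv.symm).1 hx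

theorem reach_g {VX VY : Type} (EX : VX → VX → Prop) (EY : VY → VY → Prop)
    (A : Set VX) (f : A → VY) (u v : VX) (h : Reaches EX u v) :
    Reaches (PushE EX EY A f) (gMap A f u) (gMap A f v) :=
  Relation.ReflTransGen.lift (gMap A f) (fun a b e => Or.inl ⟨a, b, e, rfl, rfl⟩) _ _ h

/-- Let `i : A → X` be a long cofibration of directed graphs and `f : A → Y` any map of
directed graphs, and form the pushout `X ∪_A Y` in the category of directed graphs.  Then
the canonical map `j : Y → X ∪_A Y` is a long cofibration. -/
theorem pushout_inr_isLongCofib {VX VY : Type} (EX : VX → VX → Prop) (EY : VY → VY → Prop)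
    (A : Set VX) (hA : IsLongCofibSet EX A) (f : A → VY)
    (hf : ∀ u v : A, EX u v → f u = f v ∨ EY (f u) (f v)) :
    IsLongCofibMap EY (PushE EX EY A f) (jMap A f) := by
  refine ⟨jMap_inj A f, ?_, ?_, ?_⟩
  · intro y y' hne
    constructor
    · intro h
      obtain ⟨z, hz, h'⟩ := edge_to_j EX EY A hA f hf _ _ h
      have := jMap_inj A f hz
      subst this
      exact h'.resolve_left hne
    · intro h
      exact Or.inr ⟨y, y', h, rfl, rfl⟩
  · intro p hp y h
    apply hp
    induction h using Relation.ReflTransGen.head_induction_on with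
    | refl => exact ⟨y, rfl⟩
    | head h1 _ ih =>
      by_contra hn
      obtain ⟨z, rfl⟩ := not_not.mp (fun hc => hc (ih hc))
      obtain ⟨w, hw, _⟩ := edge_to_j EX EY A hA f hf _ _ h1
      exact hn ⟨w, hw⟩
  · intro p hp
    by_cases hr : ∃ y, jMap A f y = p
    · obtain ⟨y₀, rfl⟩ := hr
      exact ⟨y₀, fun y => Iff.rfl⟩
    · obtain ⟨x, rfl⟩ : ∃ x, gMap A f x = p := by
        induction p using Quot.ind with
        | mk s =>
          rcases s with x | y
          · exact ⟨x, rfl⟩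
          · exact absurd ⟨y, rfl⟩ hr
      have hx : x ∉ A := fun hx => hr ⟨_, (gMap_mem A f x hx).symm⟩
      obtain ⟨y, hy⟩ := hp
      obtain ⟨a, ha, hax, _⟩ := reach_to_g EX EY A f y _ hy x hx rfl
      obtain ⟨q, hq, hqa⟩ := hA.2 x ⟨a, ha, hax⟩
      refine ⟨f ⟨q, hq⟩, fun z => ?_⟩
      rw [← gMap_mem A f q hq]
      constructor
      · intro h
        obtain ⟨b, hb, hbx, hzb⟩ := reach_to_g EX EY A f z _ h x hx rfl
        exact Relation.ReflTransGen.trans hzb (reach_g EX EY A f _ _ ((hqa b hb).1 hbx))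
      · intro h
        exact Relation.ReflTransGen.trans h
          (reach_g EX EY A f _ _ ((hqa q hq).2 Relation.ReflTransGen.refl))
end
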